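/- arXiv:2308.04752 — 2 statements merged into one kernel-verified Lean document; each statement's English description precedes it below -/
import Mathlib

section
/- The number of 4-regular partitions b_4(n) is odd if and only if n is a triangular number, i.e., b_4(n) ≡ 1 (mod 2) if and only if 8n+1 is an odd perfect square. -/
/-- `bReg k n` is the number of `k`-regular partitions of `n`,
i.e. partitions of `n` in which no part is divisible by `k`. -/
noncomputable def bReg (k n : ℕ) : ℕ :=
  (Finset.univ.filter fun p : n.Partition => ∀ i ∈ p.parts, ¬ k ∣ i).card

open Finset PowerSeries in
/-- One telescoping step in Shanks' proof of Gauss' triangular number identity. -/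
theorem shanks_tele {A : Type*} [CommRing A] (q : A) (u : ℕ → A)
    (hu : ∀ j, u j * (1 - q ^ (2 * j + 1)) = 1) (n k : ℕ) (hk : k ≤ n) :
    ∑ s ∈ range k, ((∏ j ∈ Ico s (n + 1), (1 - q ^ (2 * j + 2)) * u j) * q ^ (s * (2 * n + 3))
      - (∏ j ∈ Ico s n, (1 - q ^ (2 * j + 2)) * u j) * q ^ (s * (2 * n + 1)))
    = u n * (∏ j ∈ Ico k n, (1 - q ^ (2 * j + 2)) * u j) * q ^ (k * (2 * n + 1))
        * (1 - q ^ (2 * k)) := by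
  induction k with
  | zero => simp
  | succ k ih =>
    rw [sum_range_succ, ih (by omega), prod_Ico_succ_top (by omega),
      prod_eq_prod_Ico_succ_bot (show k < n by omega)]
    set R := ∏ j ∈ Ico (k + 1) n, (1 - q ^ (2 * j + 2)) * u j
    have h1 := hu k
    have h2 := hu n
    have e1 : q ^ (k * (2 * n + 3)) = q ^ (k * (2 * n + 1)) * q ^ (2 * k) := by ring
    have e2 : q ^ ((k + 1) * (2 * n + 1)) = q ^ (k * (2 * n + 1)) * q ^ (2 * n + 1) := by ring
    have e3 : q ^ (2 * (k + 1)) = q ^ (2 * k) * q ^ 2 := by ring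
    have e4 : q ^ (2 * k + 2) = q ^ (2 * k) * q ^ 2 := by ring
    have e5 : q ^ (2 * k + 1) = q ^ (2 * k) * q := by ring
    have e6 : q ^ (2 * n + 2) = q ^ (2 * n + 1) * q := by ring
    rw [e5] at h1
    rw [e1, e2, e3, e4, e6]
    generalize q ^ (k * (2 * n + 1)) = a at *
    generalize q ^ (2 * k) = b at *
    generalize q ^ (2 * n + 1) = c at *
    linear_combination (R * a * (1 - b * q ^ 2)) * (u n * c) * h1 +
      (R * a * (1 - b * q ^ 2)) * u k * h2

open Finset in
theorem shanks {A : Type*} [CommRing A] (q : A) (u : ℕ → A)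
    (hu : ∀ j, u j * (1 - q ^ (2 * j + 1)) = 1) (n : ℕ) :
    ∑ s ∈ range n, (∏ j ∈ Ico s n, (1 - q ^ (2 * j + 2)) * u j) * q ^ (s * (2 * n + 1))
      = ∑ s ∈ range (2 * n), q ^ (s * (s + 1) / 2) := by
  induction n with
  | zero => simp
  | succ n ih =>
    have ht := shanks_tele q u hu n n le_rfl
    rw [sum_sub_distrib, ih] at ht
    rw [show 2 * (n + 1) = 2 * n + 1 + 1 by ring, sum_range_succ, sum_range_succ, sum_range_succ]
    rw [sub_eq_iff_eq_add] at ht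
    rw [show 2 * n + 1 + 1 + 1 = 2 * n + 3 by ring, ht]
    have a1 : 2 * n * (2 * n + 1) / 2 = n * (2 * n + 1) := by
      rw [mul_assoc]; exact Nat.mul_div_cancel_left _ (by norm_num)
    have a2 : (2 * n + 1) * (2 * n + 1 + 1) / 2 = n * (2 * n + 1) + (2 * n + 1) := by
      rw [show (2 * n + 1) * (2 * n + 1 + 1) = 2 * (n * (2 * n + 1) + (2 * n + 1)) by ring]
      exact Nat.mul_div_cancel_left _ (by norm_num)
    rw [a1, a2]
    simp only [Ico_self, prod_empty, Nat.Ico_succ_singleton, prod_singleton]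
    have h2 := hu n
    have e1 : q ^ (n * (2 * n + 3)) = q ^ (n * (2 * n + 1)) * q ^ (2 * n) := by ring
    have e2 : q ^ (n * (2 * n + 1) + (2 * n + 1)) = q ^ (n * (2 * n + 1)) * (q ^ (2 * n) * q) := by
      ring
    have e5 : q ^ (2 * n + 1) = q ^ (2 * n) * q := by ring
    have e6 : q ^ (2 * n + 2) = q ^ (2 * n) * q ^ 2 := by ring
    rw [e5] at h2
    rw [e1, e2, e6]
    generalize q ^ (n * (2 * n + 1)) = a at *
    generalize q ^ (2 * n) = b at *
    linear_combination (a * (1 + b * q)) * h2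

/-- Finite Euler product. -/
noncomputable def eulerD (n : ℕ) : PowerSeries (ZMod 2) :=
  ∏ i ∈ Finset.range n, (1 - PowerSeries.X ^ (i + 1))

theorem eulerD_dvd (n k : ℕ) :
    (PowerSeries.X : PowerSeries (ZMod 2)) ^ (n + 1) ∣ eulerD (n + k) - eulerD n := by
  induction k with
  | zero => simp
  | succ k ih =>
    have : eulerD (n + (k + 1)) - eulerD n = (eulerD (n + k) - eulerD n)
        - PowerSeries.X ^ (n + 1) * (PowerSeries.X ^ k * eulerD (n + k)) := by
      rw [eulerD, ← add_assoc, Finset.prod_range_succ, ← eulerD]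
      ring
    rw [this]
    exact dvd_sub ih (dvd_mul_right _ _)

instance charP_ps : CharP (PowerSeries (ZMod 2)) 2 :=
  charP_of_injective_ringHom (f := PowerSeries.C (R := ZMod 2)) PowerSeries.C_injective 2

theorem eulerD_two_mul (n : ℕ) :
    eulerD (2 * n) = eulerD n ^ 2 * ∏ j ∈ Finset.range n, (1 - PowerSeries.X ^ (2 * j + 1)) := by
  induction n with
  | zero => simp [eulerD]
  | succ n ih =>
    have h1 : eulerD (2 * (n + 1)) = eulerD (2 * n) * (1 - PowerSeries.X ^ (2 * n + 1))
        * (1 - PowerSeries.X ^ (2 * n + 2)) := by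
      rw [eulerD, show 2 * (n + 1) = 2 * n + 1 + 1 by ring, Finset.prod_range_succ,
        Finset.prod_range_succ, ← eulerD]
    have h2 : eulerD (n + 1) = eulerD n * (1 - PowerSeries.X ^ (n + 1)) := by
      rw [eulerD, Finset.prod_range_succ, ← eulerD]
    have h3 : (1 - PowerSeries.X ^ (n + 1) : PowerSeries (ZMod 2)) ^ 2
        = 1 - PowerSeries.X ^ (2 * n + 2) := by
      rw [sub_pow_char (p := 2)]; ring
    rw [h1, h2, Finset.prod_range_succ, ih, mul_pow, h3]
    ring

theorem evenProd (n : ℕ) :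
    ∏ j ∈ Finset.range n, (1 - PowerSeries.X ^ (2 * j + 2) : PowerSeries (ZMod 2))
      = eulerD n ^ 2 := by
  rw [eulerD, ← Finset.prod_pow]
  refine Finset.prod_congr rfl fun j _ => ?_
  rw [sub_pow_char (p := 2)]; ring

theorem isUnit_one_sub (k : ℕ) : IsUnit (1 - PowerSeries.X ^ (k + 1) : PowerSeries (ZMod 2)) := by
  rw [PowerSeries.isUnit_iff_constantCoeff]; simp

theorem key (n : ℕ) : (PowerSeries.X : PowerSeries (ZMod 2)) ^ (n + 1 + 1) ∣
    eulerD (2 * (n + 1)) ^ 3 - ∑ s ∈ Finset.range (2 * (n + 1)), PowerSeries.X ^ (s * (s + 1) / 2) := by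
  choose u hu using fun j => (isUnit_one_sub (2 * j)).exists_left_inv
  rw [← shanks PowerSeries.X u hu (n + 1)]
  rw [Finset.sum_range_succ', ← Finset.range_eq_Ico]
  set N := n + 1
  set B : PowerSeries (ZMod 2) := ∏ j ∈ Finset.range N, (1 - PowerSeries.X ^ (2 * j + 1)) with hB
  set P : PowerSeries (ZMod 2) :=
    ∏ j ∈ Finset.range N, ((1 - PowerSeries.X ^ (2 * j + 2)) * u j) with hP
  have hPB : P * B = eulerD N ^ 2 := by
    rw [← evenProd, hP, hB, ← Finset.prod_mul_distrib]
    refine Finset.prod_congr rfl fun j _ => ?_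
    rw [mul_assoc, hu, mul_one]
  have hBu : IsUnit B := by
    rw [hB, IsUnit.prod_iff]; exact fun j _ => isUnit_one_sub _
  have hDu : IsUnit (eulerD N ^ 2) := by
    apply IsUnit.pow; rw [eulerD, IsUnit.prod_iff]; exact fun j _ => isUnit_one_sub _
  have h1 : (PowerSeries.X : PowerSeries (ZMod 2)) ^ (N + 1) ∣ eulerD (2 * N) ^ 3 - P := by
    rw [← (hBu.mul hDu).dvd_mul_right]
    have : (eulerD (2 * N) ^ 3 - P) * (B * eulerD N ^ 2) = eulerD (N + N) ^ 4 - eulerD N ^ 4 := by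
      rw [← two_mul]
      linear_combination (-eulerD (2 * N) ^ 3) * eulerD_two_mul N - eulerD N ^ 2 * hPB
    rw [this]
    exact (eulerD_dvd N N).trans (sub_dvd_pow_sub_pow _ _ 4)
  rw [zero_mul, pow_zero, mul_one, sub_add_eq_sub_sub_swap]
  refine dvd_sub h1 (Finset.dvd_sum fun s _ => Dvd.dvd.mul_left (pow_dvd_pow _ ?_) _)
  nlinarith

theorem tri_inj {s t : ℕ} (h : s * (s + 1) / 2 = t * (t + 1) / 2) : s = t := by
  have h1 := Nat.div_mul_cancel (Nat.even_mul_succ_self s).two_dvd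
  have h2 := Nat.div_mul_cancel (Nat.even_mul_succ_self t).two_dvd
  rw [h, h2] at h1
  nlinarith

theorem coeff_tri (n m : ℕ) (hm : m ≤ n) :
    PowerSeries.coeff m (∑ s ∈ Finset.range (2 * (n + 1)),
      (PowerSeries.X : PowerSeries (ZMod 2)) ^ (s * (s + 1) / 2)) = 1 ↔
    ∃ t : ℕ, Odd t ∧ t ^ 2 = 8 * m + 1 := by
  have hh : ∀ s, 8 * (s * (s + 1) / 2) + 1 = (2 * s + 1) ^ 2 := fun s => by
    have h1 := Nat.div_mul_cancel (Nat.even_mul_succ_self s).two_dvd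
    nlinarith
  rw [map_sum]
  simp only [PowerSeries.coeff_X_pow]
  constructor
  · intro h
    obtain ⟨s, -, hs⟩ := Finset.exists_ne_zero_of_sum_ne_zero (h ▸ one_ne_zero)
    have hs' : m = s * (s + 1) / 2 := by by_contra hc; simp [hc] at hs
    exact ⟨2 * s + 1, ⟨s, rfl⟩, by rw [hs', hh]⟩
  · rintro ⟨t, ⟨s, rfl⟩, ht⟩
    rw [← hh] at ht
    have hm' : m = s * (s + 1) / 2 := by omega
    have hs := Nat.div_mul_cancel (Nat.even_mul_succ_self s).two_dvd
    rw [Finset.sum_eq_single s]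
    · simp [hm']
    · intro b _ hb
      rw [if_neg]
      intro h; exact hb (tri_inj (h.symm.trans hm'))
    · intro h
      exfalso; apply h
      rw [Finset.mem_range]
      nlinarith

open PowerSeries.WithPiTopology in
theorem coeff_bReg (m : ℕ) : ∃ n, m ≤ n ∧
    PowerSeries.coeff m (eulerD (2 * (n + 1)) ^ 3) = (bReg 4 m : ZMod 2) := by
  letI : TopologicalSpace (ZMod 2) := ⊥
  haveI : DiscreteTopology (ZMod 2) := ⟨rfl⟩
  have h := (Nat.Partition.hasProd_powerSeriesMk_card_countRestricted (ZMod 2)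
    (m := 4) (by norm_num)).tendsto_prod_nat
  rw [PowerSeries.WithPiTopology.tendsto_iff_coeff_tendsto] at h
  have h := h m
  rw [nhds_discrete, Filter.tendsto_pure, Filter.eventually_atTop] at h
  obtain ⟨N, hN⟩ := h
  refine ⟨N + m, by omega, ?_⟩
  have h := hN (2 * (N + m + 1)) (by omega)
  rw [PowerSeries.coeff_mk, ← Nat.Partition.card_restricted_eq_card_countRestricted _ (by norm_num)]
    at h
  have e : bReg 4 m = (Nat.Partition.restricted m (¬ 4 ∣ ·)).card := rfl
  rw [e, ← h, eulerD, ← Finset.prod_pow]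
  congr 1
  refine Finset.prod_congr rfl fun i _ => ?_
  have h2 : (2 : PowerSeries (ZMod 2)) = 0 := by
    exact_mod_cast CharP.cast_eq_zero (PowerSeries (ZMod 2)) 2
  simp only [Finset.sum_range_succ, Finset.sum_range_zero, pow_mul]
  generalize (PowerSeries.X : PowerSeries (ZMod 2)) ^ (i + 1) = y
  linear_combination (-2 * y + y ^ 2 - y ^ 3) * h2

/-- `b_4(n)` is odd if and only if `8n+1` is an odd perfect square. -/
theorem b4_odd_iff (n : ℕ) :
    bReg 4 n % 2 = 1 ↔ ∃ m : ℕ, Odd m ∧ m ^ 2 = 8 * n + 1 := by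
  obtain ⟨k, hk, h⟩ := coeff_bReg n
  have hd := PowerSeries.X_pow_dvd_iff.mp (key k) n (by omega)
  rw [map_sub, sub_eq_zero] at hd
  rw [← coeff_tri k n hk, ← hd, h, ← Nat.odd_iff, ZMod.natCast_eq_one_iff_odd]
end

section
/- If l is a prime with l ≡ 13, 17, 19, or 23 (mod 24), then b_4(3l(ln+j) + (l^2-1)/8) ≡ 0 (mod 3) for every nonnegative integer n and every j with 1 ≤ j ≤ l-1. -/
open PowerSeries

namespace B4

/-- The ring of power series over `ZMod 3`. -/
abbrev K := PowerSeries (ZMod 3)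

/-- Generalised theta series `∑ w i q^(e i)`. -/
noncomputable def T {ι : Type*} (e : ι → ℤ) (w : ι → ZMod 3) : K :=
  PowerSeries.mk fun n => ∑ᶠ i, if e i = (n : ℤ) then w i else 0

/-- Exponent functions that are nonnegative with finite fibres. -/
def Good {ι : Type*} (e : ι → ℤ) : Prop :=
  (∀ i, 0 ≤ e i) ∧ ∀ n : ℕ, {i | e i ≤ (n : ℤ)}.Finite

theorem coeff_T {ι : Type*} (e : ι → ℤ) (w : ι → ZMod 3) (n : ℕ) :
    coeff n (T e w) = ∑ᶠ i, if e i = (n : ℤ) then w i else 0 := by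
  simp [T]

theorem T_coeff_ne {ι : Type*} {e : ι → ℤ} {w : ι → ZMod 3} {n : ℕ}
    (h : coeff n (T e w) ≠ 0) : ∃ i, e i = (n : ℤ) ∧ w i ≠ 0 := by
  by_contra! hc
  apply h
  rw [coeff_T]
  apply finsum_eq_zero_of_forall_eq_zero
  intro i
  split_ifs with hi
  · exact hc i hi
  · rfl

theorem T_inj {ι κ : Type*} {e : ι → ℤ} {w : ι → ZMod 3} {e' : κ → ℤ} {w' : κ → ZMod 3}
    (σ : κ → ι) (hσ : Function.Injective σ) (he : ∀ j, e (σ j) = e' j)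
    (hw : ∀ j, w (σ j) = w' j) (hr : ∀ i, w i ≠ 0 → ∃ j, σ j = i) : T e w = T e' w' := by
  ext n
  rw [coeff_T, coeff_T, ← finsum_mem_univ]
  rw [finsum_mem_inter_support_eq' _ Set.univ (Set.range σ), finsum_mem_range hσ]
  · simp only [he, hw]
  · intro i hi
    simp only [Function.mem_support, ne_eq, ite_eq_right_iff, Classical.not_imp] at hi
    simp only [Set.mem_univ, Set.mem_range, true_iff]
    exact hr i hi.2

theorem T_add {ι : Type*} {e : ι → ℤ} (he : Good e) (w w' : ι → ZMod 3) :
    T e (fun i => w i + w' i) = T e w + T e w' := by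
  ext n
  rw [map_add, coeff_T, coeff_T, coeff_T, ← finsum_add_distrib]
  · apply finsum_congr
    intro i
    split_ifs <;> simp
  · apply (he.2 n).subset
    intro i hi
    simp only [Function.mem_support, ne_eq, ite_eq_right_iff, Classical.not_imp] at hi
    exact hi.1.le
  · apply (he.2 n).subset
    intro i hi
    simp only [Function.mem_support, ne_eq, ite_eq_right_iff, Classical.not_imp] at hi
    exact hi.1.le

theorem T_neg {ι : Type*} (e : ι → ℤ) (w : ι → ZMod 3) :
    T e (fun i => - w i) = - T e w := by
  ext n
  rw [map_neg, coeff_T, coeff_T, ← finsum_neg_distrib]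
  apply finsum_congr
  intro i
  split_ifs <;> simp

theorem coeff_T_sum {ι : Type*} (e : ι → ℤ) (w : ι → ZMod 3) (n : ℕ) (S : Finset ι)
    (hS : ∀ i, e i = (n : ℤ) → i ∈ S) :
    coeff n (T e w) = ∑ i ∈ S, if e i = (n : ℤ) then w i else 0 := by
  rw [coeff_T]
  apply finsum_eq_sum_of_support_subset
  intro i hi
  simp only [Function.mem_support, ne_eq, ite_eq_right_iff, Classical.not_imp] at hi
  exact hS i hi.1

theorem T_mul {ι κ : Type*} {e : ι → ℤ} (he : Good e) (w : ι → ZMod 3)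
    {e' : κ → ℤ} (he' : Good e') (w' : κ → ZMod 3) :
    T e w * T e' w' = T (fun x : ι × κ => e x.1 + e' x.2) (fun x => w x.1 * w' x.2) := by
  ext n
  rw [coeff_mul]
  set S := (he.2 n).toFinset with hS
  set S' := (he'.2 n).toFinset with hS'
  rw [coeff_T_sum _ _ n (S ×ˢ S')]
  · rw [Finset.sum_congr rfl (g := fun p : ℕ × ℕ => ∑ i ∈ S, ∑ j ∈ S',
      if e i = (p.1 : ℤ) ∧ e' j = (p.2 : ℤ) then w i * w' j else 0)]
    · rw [Finset.sum_comm, Finset.sum_product]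
      apply Finset.sum_congr rfl
      intro i hi
      rw [Finset.sum_comm]
      apply Finset.sum_congr rfl
      intro j hj
      have h1 := he.1 i
      have h2 := he'.1 j
      obtain ⟨a, ha⟩ := Int.eq_ofNat_of_zero_le h1
      obtain ⟨b, hb⟩ := Int.eq_ofNat_of_zero_le h2
      simp only [ha, hb]
      split_ifs with h
      · rw [Finset.sum_eq_single (a, b)]
        · simp
        · rintro ⟨c, d⟩ _ hne
          rw [if_neg]
          rintro ⟨h3, h4⟩
          apply hne
          simp only [Nat.cast_inj] at h3 h4
          rw [h3, h4]
        · intro hn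
          exfalso
          apply hn
          rw [Finset.HasAntidiagonal.mem_antidiagonal]
          exact_mod_cast h
      · apply Finset.sum_eq_zero
        rintro ⟨c, d⟩ hcd
        rw [if_neg]
        rintro ⟨h3, h4⟩
        apply h
        rw [Finset.HasAntidiagonal.mem_antidiagonal] at hcd
        simp only at h3 h4 hcd
        omega
    · rintro ⟨a, b⟩ hab
      rw [Finset.HasAntidiagonal.mem_antidiagonal] at hab
      simp only at hab
      rw [coeff_T_sum e w a S, coeff_T_sum e' w' b S', Finset.sum_mul_sum]
      · apply Finset.sum_congr rfl
        intro i _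
        apply Finset.sum_congr rfl
        intro j _
        split_ifs <;> simp_all
      · intro i hi
        simp only [hS', Set.Finite.mem_toFinset, Set.mem_ofPred_eq]
        omega
      · intro i hi
        simp only [hS, Set.Finite.mem_toFinset, Set.mem_ofPred_eq]
        omega
  · rintro ⟨i, j⟩ hij
    have h1 := he.1 i
    have h2 := he'.1 j
    simp only [hS', hS, Finset.mem_product, Set.Finite.mem_toFinset, Set.mem_ofPred_eq]
    simp only at hij
    omega

theorem Good.prod {ι κ : Type*} {e : ι → ℤ} (he : Good e) {e' : κ → ℤ} (he' : Good e') :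
    Good (fun x : ι × κ => e x.1 + e' x.2) := by
  refine ⟨fun x => add_nonneg (he.1 _) (he'.1 _), fun n => ?_⟩
  apply ((he.2 n).prod (he'.2 n)).subset
  rintro ⟨i, j⟩ hij
  have h1 := he.1 i
  have h2 := he'.1 j
  simp only [Set.mem_ofPred_eq] at hij
  simp only [Set.mem_prod, Set.mem_ofPred_eq]
  omega

theorem T_expand {ι : Type*} (e : ι → ℤ) (w : ι → ZMod 3) (p : ℕ) (hp : p ≠ 0) :
    expand p hp (T e w) = T (fun i => (p : ℤ) * e i) w := by
  ext n
  rw [coeff_expand]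
  split_ifs with h
  · obtain ⟨k, rfl⟩ := h
    rw [Nat.mul_div_cancel_left _ (Nat.pos_of_ne_zero hp), coeff_T, coeff_T]
    apply finsum_congr
    intro i
    have : ((p : ℤ) * e i = ((p * k : ℕ) : ℤ)) ↔ e i = (k : ℤ) := by
      push_cast
      exact mul_right_inj' (by exact_mod_cast hp)
    simp only [this]
  · symm
    by_contra hne
    obtain ⟨i, hi, _⟩ := T_coeff_ne hne
    apply h
    have : (p : ℤ) ∣ (n : ℤ) := ⟨_, hi.symm⟩
    exact_mod_cast this

/-- sign `(-1)^x`. -/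
noncomputable def sg (x : ℤ) : ZMod 3 := if Even x then 1 else -1

theorem sg_natCast (n : ℕ) : sg (n : ℤ) = (-1) ^ n := by
  unfold sg
  split_ifs with h
  · rw [Even.neg_one_pow]
    exact_mod_cast h
  · rw [Odd.neg_one_pow]
    rw [← Nat.not_even_iff_odd]
    exact_mod_cast h

theorem sg_add (x y : ℤ) : sg (x + y) = sg x * sg y := by
  unfold sg
  by_cases hx : Even x <;> by_cases hy : Even y <;> simp [hx, hy, Int.even_add]

theorem sg_mul_self (x : ℤ) : sg (x * x) = sg x := by
  unfold sg
  simp [Int.even_mul]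

theorem sg_sq (x : ℤ) : sg (x ^ 2) = sg x := by
  rw [pow_two, sg_mul_self]

theorem T_rescale {ι : Type*} (e : ι → ℤ) (w : ι → ZMod 3) :
    rescale (-1) (T e w) = T e (fun i => sg (e i) * w i) := by
  ext n
  rw [coeff_rescale, coeff_T, coeff_T, mul_finsum]
  apply finsum_congr
  intro i
  split_ifs with h
  · rw [h, sg_natCast]
  · simp

theorem cube (f : K) : f ^ 3 = expand 3 (by norm_num) f := by
  have : Fact (Nat.Prime 3) := ⟨by norm_num⟩
  have h := MvPowerSeries.map_frobenius_expand 3 (by norm_num) (R := ZMod 3) (σ := Unit) (f := f)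
  rw [ZMod.frobenius_zmod] at h
  rw [PowerSeries.expand]
  rw [MvPowerSeries.map_id] at h
  exact h.symm

/-- triangular numbers -/
def tri (a : ℤ) : ℤ := a * (a + 1) / 2

theorem two_tri (a : ℤ) : 2 * tri a = a * (a + 1) := by
  unfold tri
  exact Int.mul_ediv_cancel' (Int.even_mul_succ_self a).two_dvd

theorem good_sq : Good (fun x : ℤ => x ^ 2) := by
  refine ⟨fun x => sq_nonneg x, fun n => ?_⟩
  apply (Set.finite_Icc (-(n : ℤ)) n).subset
  intro x hx
  simp only [Set.mem_ofPred_eq] at hx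
  rw [Set.mem_Icc]
  constructor <;> nlinarith

theorem tri_nonneg (a : ℤ) : 0 ≤ tri a := by
  have h := two_tri a
  by_contra! hc
  rcases le_or_gt 0 a with h1 | h1 <;> nlinarith

theorem good_tri : Good tri := by
  refine ⟨tri_nonneg, fun n => ?_⟩
  apply (Set.finite_Icc (-(2 * n + 1 : ℤ)) (2 * n + 1)).subset
  intro x hx
  have h := two_tri x
  simp only [Set.mem_ofPred_eq] at hx
  rw [Set.mem_Icc]
  constructor <;> nlinarith

theorem Good.smul {ι : Type*} {e : ι → ℤ} (he : Good e) (p : ℕ) (hp : p ≠ 0) :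
    Good (fun i => (p : ℤ) * e i) := by
  have hp' : (1 : ℤ) ≤ p := by exact_mod_cast Nat.pos_of_ne_zero hp
  refine ⟨fun x => mul_nonneg (by positivity) (he.1 x), fun n => ?_⟩
  apply (he.2 n).subset
  intro x hx
  have := he.1 x
  simp only [Set.mem_ofPred_eq] at hx ⊢
  nlinarith

theorem T_unit (k : ℕ) : T (fun _ : Unit => (k : ℤ)) (fun _ => 1) = X ^ k := by
  ext n
  rw [coeff_T, finsum_unique, coeff_X_pow]
  by_cases h : n = k
  · simp [h]
  · simp [h, Ne.symm h]

theorem good_unit (k : ℕ) : Good (fun _ : Unit => (k : ℤ)) :=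
  ⟨fun _ => by positivity, fun _ => Set.toFinite _⟩

theorem X_mul_T {ι : Type*} {e : ι → ℤ} (he : Good e) (w : ι → ZMod 3) :
    X * T e w = T (fun i => 1 + e i) w := by
  have h := T_unit 1
  rw [pow_one] at h
  rw [← h, T_mul (good_unit 1) _ he]
  apply T_inj (fun i => ((), i))
  · intro i j hij
    simpa using hij
  · intro j
    simp
  · intro j
    simp
  · rintro ⟨_, i⟩ _
    exact ⟨i, rfl⟩

/-- `φ(q)` -/
noncomputable def phi : K := T (fun x : ℤ => x ^ 2) (fun _ => 1)
/-- `φ(-q)` -/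
noncomputable def phm : K := T (fun x : ℤ => x ^ 2) sg
/-- twice `ψ(q)` -/
noncomputable def Psi : K := T tri (fun _ => 1)
/-- `ψ(q)` -/
noncomputable def psi : K := T (fun s : ℕ => tri s) (fun _ => 1)

theorem good_psi : Good (fun s : ℕ => tri s) := by
  refine ⟨fun s => tri_nonneg s, fun n => ?_⟩
  exact Set.Finite.preimage (f := fun s : ℕ => (s : ℤ)) (Nat.cast_injective.injOn) (good_tri.2 n)

theorem three_eq : (3 : K) = 0 := by
  have : (3 : K) = C (3 : ZMod 3) := (map_ofNat C 3).symm
  rw [this]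
  have h : (3 : ZMod 3) = 0 := by decide
  rw [h, map_zero]

theorem rescale_phi : rescale (-1) phi = phm := by
  unfold phi phm
  rw [T_rescale]
  simp only [sg_sq, mul_one]

theorem resc_resc (f : K) : rescale (-1) (rescale (-1) f) = f := by
  ext n
  rw [coeff_rescale, coeff_rescale, ← mul_assoc, ← mul_pow]
  simp

theorem rescale_phm : rescale (-1) phm = phi := by
  rw [← rescale_phi, resc_resc]

theorem rescale_expand_two (f : K) :
    rescale (-1) (expand 2 (by norm_num) f) = expand 2 (by norm_num) f := by
  ext n
  rw [coeff_rescale, coeff_expand]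
  split_ifs with h
  · rw [Even.neg_one_pow (even_iff_two_dvd.2 h), one_mul]
  · simp

theorem Psi_eq : Psi = - psi := by
  have h : Psi = psi + psi := by
    unfold Psi
    have : (fun _ : ℤ => (1 : ZMod 3)) =
      fun a => (if 0 ≤ a then 1 else 0) + (if 0 ≤ a then 0 else 1) := by
      ext a
      split_ifs <;> simp
    rw [this, T_add good_tri]
    congr 1
    · apply T_inj (fun s : ℕ => (s : ℤ)) Nat.cast_injective
      · intro j; rfl
      · intro j; simp
      · intro i hi
        have : 0 ≤ i := by
          by_contra hc
          simp [hc] at hi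
        exact ⟨i.toNat, by omega⟩
    · apply T_inj (fun s : ℕ => -1 - (s : ℤ))
      · intro a b hab
        have hab' : -1 - (a : ℤ) = -1 - (b : ℤ) := hab
        omega
      · intro j
        have h1 := two_tri j
        have h2 := two_tri (-1 - j)
        nlinarith
      · intro j
        rw [if_neg (by omega)]
      · intro i hi
        have : ¬ 0 ≤ i := by
          intro hc
          simp [hc] at hi
        exact ⟨(-1 - i).toNat, by omega⟩
  linear_combination h + psi * three_eq

theorem R5' : Psi * Psi =
    expand 2 (by norm_num) Psi * phi + expand 2 (by norm_num) Psi * phi := by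
  unfold Psi phi
  rw [T_expand, T_mul (good_tri.smul 2 (by norm_num)) _ good_sq, T_mul good_tri _ good_tri]
  have : (fun x : ℤ × ℤ => (1 : ZMod 3) * 1) =
      fun x => (if Even (x.1 - x.2) then 1 else 0) + (if Even (x.1 - x.2) then 0 else 1) := by
    ext a
    split_ifs <;> simp
  conv_lhs => rw [this, T_add (good_tri.prod good_tri)]
  congr 1
  · apply T_inj (fun x : ℤ × ℤ => (x.1 + x.2, x.1 - x.2))
    · rintro ⟨a, b⟩ ⟨c, d⟩ h
      simp only [Prod.mk.injEq] at h ⊢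
      omega
    · rintro ⟨c, t⟩
      have h1 := two_tri (c + t)
      have h2 := two_tri (c - t)
      have h3 := two_tri c
      simp only
      push_cast
      nlinarith
    · rintro ⟨c, t⟩
      simp only
      rw [if_pos ⟨t, by ring⟩, mul_one]
    · rintro ⟨a, b⟩ h
      have : Even (a - b) := by
        by_contra hc
        simp [hc] at h
      obtain ⟨t, ht⟩ := this
      refine ⟨(b + t, t), ?_⟩
      simp only [Prod.mk.injEq]
      omega
  · apply T_inj (fun x : ℤ × ℤ => (x.1 + x.2, -1 - (x.1 - x.2)))
    · rintro ⟨a, b⟩ ⟨c, d⟩ h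
      simp only [Prod.mk.injEq] at h ⊢
      omega
    · rintro ⟨c, t⟩
      have h1 := two_tri (c + t)
      have h2 := two_tri (-1 - (c - t))
      have h3 := two_tri c
      simp only
      push_cast
      nlinarith
    · rintro ⟨c, t⟩
      simp only
      rw [if_neg, mul_one]
      rw [Int.not_even_iff_odd]
      exact ⟨c, by ring⟩
    · rintro ⟨a, b⟩ h
      have : ¬ Even (a - b) := by
        intro hc
        simp [hc] at h
      rw [Int.not_even_iff_odd] at this
      obtain ⟨t, ht⟩ := this
      refine ⟨(t, a - t), ?_⟩
      simp only [Prod.mk.injEq]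
      omega

theorem R5 : phi * expand 2 (by norm_num) psi = psi ^ 2 := by
  have h := R5'
  rw [Psi_eq, map_neg] at h
  linear_combination (-1) * h + phi * expand 2 (by norm_num) psi * three_eq

theorem T_odd_swap : T (fun x : ℤ × ℤ => x.1 ^ 2 + x.2 ^ 2)
    (fun x => if Even (x.1 + x.2) then 0 else sg x.2) = 0 := by
  set S := T (fun x : ℤ × ℤ => x.1 ^ 2 + x.2 ^ 2)
    (fun x => if Even (x.1 + x.2) then 0 else sg x.2) with hS
  have h : S = - S := by
    conv_rhs => rw [hS, ← T_neg]
    apply T_inj Prod.swap Prod.swap_injective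
    · rintro ⟨a, b⟩
      simp only [Prod.swap]
      ring
    · rintro ⟨a, b⟩
      simp only [Prod.swap]
      unfold sg
      by_cases ha : Even a <;> by_cases hb : Even b <;> simp [ha, hb, Int.even_add]
    · rintro ⟨a, b⟩ _
      exact ⟨(b, a), rfl⟩
  linear_combination (-1) * h + S * three_eq

theorem R4 : phi * phm = expand 2 (by norm_num) phm ^ 2 := by
  unfold phi phm
  rw [T_expand, pow_two, T_mul (good_sq.smul 2 (by norm_num)) _ (good_sq.smul 2 (by norm_num)),
    T_mul good_sq _ good_sq]
  have : (fun x : ℤ × ℤ => (1 : ZMod 3) * sg x.2) =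
      fun x => (if Even (x.1 + x.2) then sg x.2 else 0) +
        (if Even (x.1 + x.2) then 0 else sg x.2) := by
    ext a
    split_ifs <;> simp
  rw [this, T_add (good_sq.prod good_sq), T_odd_swap, add_zero]
  apply T_inj (fun x : ℤ × ℤ => (x.1 + x.2, x.1 - x.2))
  · rintro ⟨a, b⟩ ⟨c, d⟩ h
    simp only [Prod.mk.injEq] at h ⊢
    omega
  · rintro ⟨c, t⟩
    simp only
    push_cast
    ring
  · rintro ⟨c, t⟩
    simp only
    rw [if_pos ⟨c, by ring⟩]
    unfold sg
    by_cases ha : Even c <;> by_cases hb : Even t <;> simp [ha, hb, Int.even_sub]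
  · rintro ⟨a, b⟩ h
    have : Even (a + b) := by
      by_contra hc
      simp [hc] at h
    obtain ⟨t, ht⟩ := this
    refine ⟨(t, a - t), ?_⟩
    simp only [Prod.mk.injEq]
    omega

/-- hexagonal norm form -/
def hx (x : ℤ × ℤ) : ℤ := x.1 ^ 2 + x.1 * x.2 + x.2 ^ 2

theorem good_hx : Good hx := by
  refine ⟨fun x => ?_, fun n => ?_⟩
  · unfold hx
    nlinarith [sq_nonneg (x.1 + x.2), sq_nonneg x.1, sq_nonneg x.2]
  · apply ((Set.finite_Icc (-(2 * n : ℤ)) (2 * n)).prod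
      (Set.finite_Icc (-(2 * n : ℤ)) (2 * n))).subset
    rintro ⟨a, b⟩ h
    simp only [Set.mem_ofPred_eq, hx] at h
    simp only [Set.mem_prod, Set.mem_Icc]
    have h1 : a ^ 2 ≤ 2 * n := by nlinarith [sq_nonneg (a + 2 * b), sq_nonneg (a + b)]
    have h2 : b ^ 2 ≤ 2 * n := by nlinarith [sq_nonneg (2 * a + b), sq_nonneg (a + b)]
    refine ⟨⟨?_, ?_⟩, ⟨?_, ?_⟩⟩ <;> nlinarith

theorem T_rot (w : ℤ × ℤ → ZMod 3) : T hx (fun x => w (x.2, -x.1 - x.2)) = T hx w := by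
  symm
  apply T_inj (fun x : ℤ × ℤ => (x.2, -x.1 - x.2))
  · rintro ⟨a, b⟩ ⟨c, d⟩ h
    simp only [Prod.mk.injEq] at h ⊢
    omega
  · rintro ⟨a, b⟩
    simp only [hx]
    ring
  · intro j; rfl
  · rintro ⟨a, b⟩ _
    refine ⟨(-a - b, a), ?_⟩
    simp only [Prod.mk.injEq, true_and]
    omega

theorem T_rot2 (w : ℤ × ℤ → ZMod 3) : T hx (fun x => w (-x.1 - x.2, x.1)) = T hx w := by
  rw [← T_rot w, ← T_rot (fun x => w (x.2, -x.1 - x.2))]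
  congr 1
  ext x
  congr 2
  ring

theorem T_hx_one : T hx (fun _ => 1) = 1 := by
  classical
  set w : ℤ × ℤ → ZMod 3 := fun x =>
    if (0 < x.1 ∧ 0 ≤ x.2) ∨ (x.1 < 0 ∧ x.2 ≤ 0) then 1 else 0 with hw
  have h : (fun _ : ℤ × ℤ => (1 : ZMod 3)) = fun x => (if x.1 = 0 ∧ x.2 = 0 then 1 else 0) +
      (w x + (w (x.2, -x.1 - x.2) + w (-x.1 - x.2, x.1))) := by
    ext ⟨a, b⟩
    simp only [hw]
    split_ifs <;> first | omega | simp
  rw [h, T_add good_hx, T_add good_hx, T_add good_hx, T_rot, T_rot2]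
  have h0 : T hx (fun x => if x.1 = 0 ∧ x.2 = 0 then 1 else 0) = X ^ 0 := by
    rw [← T_unit]
    apply T_inj (fun _ => (0, 0))
    · intro a b _; rfl
    · intro j; simp [hx]
    · intro j; simp
    · rintro ⟨a, b⟩ h
      have : a = 0 ∧ b = 0 := by
        by_contra hc
        simp [hc] at h
      exact ⟨(), by rw [this.1, this.2]⟩
  rw [h0]
  linear_combination T hx w * three_eq

/-- the odd part -/
noncomputable def Od : K := T hx (fun x => if Even x.2 ∧ Odd x.1 then 1 else 0)

theorem Od_two : X * (expand 2 (by norm_num) Psi * expand 6 (by norm_num) Psi) = Od + Od := by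
  unfold Psi
  rw [T_expand, T_expand, T_mul (good_tri.smul 2 (by norm_num)) _ (good_tri.smul 6 (by norm_num)),
    X_mul_T ((good_tri.smul 2 (by norm_num)).prod (good_tri.smul 6 (by norm_num)))]
  trans T hx (fun x => if Odd x.2 then 1 else 0)
  · symm
    apply T_inj (fun x : ℤ × ℤ => (x.1 - x.2, 2 * x.2 + 1))
    · rintro ⟨a, b⟩ ⟨c, d⟩ h
      simp only [Prod.mk.injEq] at h ⊢
      omega
    · rintro ⟨c, d⟩
      have h1 := two_tri c
      have h2 := two_tri d
      simp only [hx]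
      push_cast
      linear_combination (-1) * h1 - 3 * h2
    · rintro ⟨c, d⟩
      simp
    · rintro ⟨a, b⟩ h
      have : Odd b := by
        by_contra hc
        simp [hc] at h
      obtain ⟨d, hd⟩ := this
      refine ⟨(a + d, d), ?_⟩
      simp only [Prod.mk.injEq]
      omega
  · have : (fun x : ℤ × ℤ => if Odd x.2 then (1 : ZMod 3) else 0) = fun x =>
      (fun y : ℤ × ℤ => if Even y.2 ∧ Odd y.1 then (1 : ZMod 3) else 0) (x.2, -x.1 - x.2) +
      (fun y : ℤ × ℤ => if Even y.2 ∧ Odd y.1 then (1 : ZMod 3) else 0) (-x.1 - x.2, x.1) := by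
      ext ⟨a, b⟩
      simp only [← Int.not_even_iff_odd]
      by_cases ha : Even a <;> by_cases hb : Even b <;> simp [ha, hb, Int.even_sub]
    rw [this, T_add good_hx]
    exact congrArg₂ (· + ·)
      (T_rot (fun y : ℤ × ℤ => if Even y.2 ∧ Odd y.1 then (1 : ZMod 3) else 0))
      (T_rot2 (fun y : ℤ × ℤ => if Even y.2 ∧ Odd y.1 then (1 : ZMod 3) else 0))

theorem R3' : phm * expand 3 (by norm_num) phm = 1 - Od := by
  unfold phm
  rw [T_expand, T_mul good_sq _ (good_sq.smul 3 (by norm_num))]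
  have : (fun x : ℤ × ℤ => sg x.1 * sg x.2) =
      fun x => (if Even (x.1 + x.2) then 1 else 0) +
        (- (if Even (x.1 + x.2) then 0 else 1)) := by
    ext ⟨a, b⟩
    unfold sg
    by_cases ha : Even a <;> by_cases hb : Even b <;> simp [ha, hb, Int.even_add]
  rw [this, T_add (good_sq.prod (good_sq.smul 3 (by norm_num))), T_neg, sub_eq_add_neg]
  congr 2
  · trans T (fun x => ((4 : ℕ) : ℤ) * hx x) (fun _ => 1)
    · apply T_inj (fun x : ℤ × ℤ => (2 * x.1 + x.2, x.2))
      · rintro ⟨a, b⟩ ⟨c, d⟩ h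
        simp only [Prod.mk.injEq] at h ⊢
        omega
      · rintro ⟨a, b⟩
        simp only [hx]
        push_cast
        ring
      · rintro ⟨a, b⟩
        simp only
        rw [if_pos ⟨a + b, by ring⟩]
      · rintro ⟨a, b⟩ h
        have : Even (a + b) := by
          by_contra hc
          simp [hc] at h
        obtain ⟨t, ht⟩ := this
        refine ⟨(t - b, b), ?_⟩
        simp only [Prod.mk.injEq, and_true]
        omega
    · rw [← T_expand _ _ 4 (by norm_num), T_hx_one, map_one]
  · unfold Od
    symm
    apply T_inj (fun x : ℤ × ℤ => (x.1 - x.2, 2 * x.2))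
    · rintro ⟨a, b⟩ ⟨c, d⟩ h
      simp only [Prod.mk.injEq] at h ⊢
      omega
    · rintro ⟨a, b⟩
      simp only [hx]
      push_cast
      ring
    · rintro ⟨a, b⟩
      simp only [← Int.not_even_iff_odd]
      by_cases ha : Even a <;> by_cases hb : Even b <;> simp [ha, hb, Int.even_add, Int.even_sub]
    · rintro ⟨a, b⟩ h
      have : Even b := by
        by_contra hc
        simp [hc] at h
      obtain ⟨t, ht⟩ := this
      refine ⟨(a + t, t), ?_⟩
      simp only [Prod.mk.injEq]
      omega

theorem R3 : phm ^ 4 = 1 + X * expand 2 (by norm_num) psi ^ 4 := by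
  have h1 := R3'
  have h2 := Od_two
  have h6 : expand 6 (by norm_num) Psi = (expand 2 (by norm_num) Psi) ^ 3 := by
    rw [cube, ← expand_mul]
  rw [h6, Psi_eq, map_neg] at h2
  rw [← cube] at h1
  linear_combination h1 - h2 - Od * three_eq

/-- `φ(-q²)` -/
noncomputable def xx : K := expand 2 (by norm_num) phm
/-- `ψ(q²)` -/
noncomputable def ww : K := expand 2 (by norm_num) psi
/-- `ψ(-q)` -/
noncomputable def mm : K := rescale (-1) psi

theorem cc_psi : constantCoeff psi = 1 := by
  rw [← coeff_zero_eq_constantCoeff_apply]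
  unfold psi
  rw [coeff_T_sum _ _ 0 {0}]
  · rw [Finset.sum_singleton]
    simp [tri]
  · intro i hi
    have h := two_tri i
    simp only [Nat.cast_zero] at hi
    rw [hi] at h
    have : (i : ℤ) = 0 := by nlinarith
    simp only [Finset.mem_singleton]
    omega

theorem cc_phm : constantCoeff phm = 1 := by
  rw [← coeff_zero_eq_constantCoeff_apply]
  unfold phm
  rw [coeff_T_sum _ _ 0 {0}]
  · simp [sg]
  · intro i hi
    simp only [Nat.cast_zero] at hi
    simpa using hi

theorem cc_xx : constantCoeff xx = 1 := by
  unfold xx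
  rw [constantCoeff_expand, cc_phm]

theorem cc_ww : constantCoeff ww = 1 := by
  unfold ww
  rw [constantCoeff_expand, cc_psi]

theorem cc_mm : constantCoeff mm = 1 := by
  unfold mm
  rw [← coeff_zero_eq_constantCoeff_apply, coeff_rescale, coeff_zero_eq_constantCoeff_apply,
    cc_psi]
  simp

theorem ne_of_cc {f : K} (h : constantCoeff f = 1) : f ≠ 0 := by
  rintro rfl
  simp at h

theorem r4 : phi * phm = xx ^ 2 := R4

theorem r5 : phi * ww = psi ^ 2 := R5

theorem r5m : phm * ww = mm ^ 2 := by
  have h := congrArg (rescale (-1)) R5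
  rw [map_mul, map_pow, rescale_phi, rescale_expand_two] at h
  exact h

theorem r3 : phm ^ 4 = 1 + X * ww ^ 4 := R3

theorem r3p : phi ^ 4 = 1 - X * ww ^ 4 := by
  have h := congrArg (rescale (-1)) R3
  rw [map_pow, map_add, map_mul, map_pow, rescale_phm, rescale_expand_two, map_one,
    rescale_X] at h
  rw [h]
  unfold ww
  simp
  ring

theorem r2 : psi * mm = ww * xx := by
  have h : (psi * mm - ww * xx) * (psi * mm + ww * xx) = 0 := by
    linear_combination (-mm ^ 2) * r5 - (phi * ww) * r5m + ww ^ 2 * r4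
  rcases mul_eq_zero.1 h with h | h
  · exact sub_eq_zero.1 h
  · exfalso
    have := congrArg constantCoeff h
    rw [map_add, map_mul, map_mul, cc_psi, cc_mm, cc_ww, cc_xx, map_zero] at this
    revert this
    decide

theorem r6 : psi * xx = mm * phi := by
  have h : ww * (psi * xx - mm * phi) = 0 := by
    linear_combination (-psi) * r2 - mm * r5
  exact sub_eq_zero.1 ((mul_eq_zero.1 h).resolve_left (ne_of_cc cc_ww))

/-- extraction of the exponents divisible by three -/
noncomputable def U (f : K) : K := PowerSeries.mk fun n => coeff (3 * n) f

theorem coeff_cube (f : K) (n : ℕ) : coeff n (f ^ 3) = if 3 ∣ n then coeff (n / 3) f else 0 := by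
  rw [cube, coeff_expand]

theorem coeff_shift (f : K) (r k d : ℕ) (hr : r < 3) (hd : d < 3) :
    coeff (3 * k + r) (X ^ d * f ^ 3) = if r = d then coeff k f else 0 := by
  rw [coeff_X_pow_mul', coeff_cube]
  by_cases h : r = d
  · subst h
    rw [if_pos rfl, if_pos (by omega), if_pos (by omega),
      show (3 * k + r - r) / 3 = k by omega]
  · rw [if_neg h]
    split_ifs with h1 h2
    · omega
    · rfl
    · rfl

theorem coeff_dissect (a b c : K) (k r : ℕ) (hr : r < 3) :
    coeff (3 * k + r) (a ^ 3 + X ^ 1 * b ^ 3 + X ^ 2 * c ^ 3) =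
      (if r = 0 then coeff k a else 0) + (if r = 1 then coeff k b else 0) +
      (if r = 2 then coeff k c else 0) := by
  have h := coeff_shift a r k 0 hr (by norm_num)
  rw [pow_zero, one_mul] at h
  rw [map_add, map_add, h, coeff_shift _ _ _ _ hr (by norm_num),
    coeff_shift _ _ _ _ hr (by norm_num)]

theorem exists_dissect (f : K) : ∃ b c : K, f = (U f) ^ 3 + X ^ 1 * b ^ 3 + X ^ 2 * c ^ 3 := by
  refine ⟨PowerSeries.mk fun n => coeff (3 * n + 1) f,
    PowerSeries.mk fun n => coeff (3 * n + 2) f, ?_⟩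
  ext n
  obtain ⟨k, r, hr, rfl⟩ : ∃ k r, r < 3 ∧ n = 3 * k + r :=
    ⟨n / 3, n % 3, Nat.mod_lt _ (by norm_num), by omega⟩
  rw [coeff_dissect _ _ _ _ _ hr]
  interval_cases r <;> simp [U]

theorem dissect_unique {a b c a' b' c' : K}
    (h : a ^ 3 + X ^ 1 * b ^ 3 + X ^ 2 * c ^ 3 = a' ^ 3 + X ^ 1 * b' ^ 3 + X ^ 2 * c' ^ 3) :
    a = a' := by
  ext n
  have h' := congrArg (coeff (3 * n + 0)) h
  rw [coeff_dissect _ _ _ _ _ (by norm_num), coeff_dissect _ _ _ _ _ (by norm_num)] at h'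
  simpa using h'

theorem pow_nine (f : K) : f ^ 9 = expand 9 (by norm_num) f := by
  have : f ^ 9 = (f ^ 3) ^ 3 := by ring
  rw [this, cube f, cube, ← expand_mul]

theorem psi_dissect : ∃ A : K, psi = A ^ 3 + X * psi ^ 9 ∧
    ∀ n, coeff n A ≠ 0 → ∃ x : ℕ, 24 * n + 1 = x ^ 2 := by
  set g : K := T (fun s : ℕ => tri s) (fun s => if s % 3 = 1 then 0 else 1) with hg
  have h1 : psi = g + X * psi ^ 9 := by
    rw [pow_nine]
    conv_rhs => unfold psi
    rw [T_expand, X_mul_T (good_psi.smul 9 (by norm_num))]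
    have : (fun _ : ℕ => (1 : ZMod 3)) = fun s => (if s % 3 = 1 then 0 else 1) +
        (if s % 3 = 1 then 1 else 0) := by
      ext a
      split_ifs <;> simp
    unfold psi
    conv_lhs => rw [this, T_add good_psi]
    rw [← hg]
    congr 1
    apply T_inj (fun k : ℕ => 3 * k + 1)
    · intro a b h
      have h' : 3 * a + 1 = 3 * b + 1 := h
      omega
    · intro k
      have h1 := two_tri k
      have h2 := two_tri ((3 * k + 1 : ℕ) : ℤ)
      push_cast at h2 ⊢
      nlinarith
    · intro k
      rw [if_pos (by omega)]
    · intro i hi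
      have : i % 3 = 1 := by
        by_contra hc
        simp [hc] at hi
      exact ⟨i / 3, by omega⟩
  have h2 : g = (U g) ^ 3 := by
    ext n
    rw [coeff_cube]
    split_ifs with h
    · obtain ⟨k, rfl⟩ := h
      simp [U]
    · by_contra hne
      obtain ⟨s, hs, hs'⟩ := T_coeff_ne hne
      have h3 := two_tri s
      rw [hs] at h3
      have h5 : s % 3 = 0 ∨ s % 3 = 2 := by
        have : s % 3 ≠ 1 := by
          intro hc
          simp [hc] at hs'
        omega
      have h4 : 2 * n = s * (s + 1) := by exact_mod_cast h3
      apply h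
      have : 3 ∣ 2 * n := by
        rw [h4]
        rcases h5 with h5 | h5
        · exact Dvd.dvd.mul_right (by omega) _
        · exact Dvd.dvd.mul_left (by omega) _
      omega
  refine ⟨U g, by rw [← h2]; exact h1, ?_⟩
  intro n hn
  simp only [U, coeff_mk] at hn
  obtain ⟨s, hs, _⟩ := T_coeff_ne hn
  have h3 := two_tri s
  rw [hs] at h3
  have h4 : 2 * (3 * n) = s * (s + 1) := by exact_mod_cast h3
  refine ⟨2 * s + 1, ?_⟩
  nlinarith

theorem phm_dissect : ∃ c : K, phm = phm ^ 9 + X * c ^ 3 := by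
  set g : K := T (fun s : ℤ => s ^ 2) (fun s => if s % 3 = 0 then 0 else sg s) with hg
  have h1 : phm = phm ^ 9 + g := by
    rw [pow_nine]
    conv_rhs => unfold phm
    rw [T_expand]
    have : sg = fun s => (if s % 3 = 0 then sg s else 0) +
        (if s % 3 = 0 then 0 else sg s) := by
      ext a
      split_ifs <;> simp
    unfold phm
    conv_lhs => rw [this, T_add good_sq]
    rw [← hg]
    congr 1
    apply T_inj (fun k : ℤ => 3 * k)
    · intro a b h
      have h' : 3 * a = 3 * b := h
      omega
    · intro k
      push_cast
      ring
    · intro k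
      rw [if_pos (by omega)]
      unfold sg
      have h3 : ¬ Even (3 : ℤ) := by decide
      simp [Int.even_mul, h3]
    · intro i hi
      have : i % 3 = 0 := by
        by_contra hc
        simp [hc] at hi
      exact ⟨i / 3, by omega⟩
  have key : ∀ n, coeff n g ≠ 0 → n % 3 = 1 := by
    intro n hn
    obtain ⟨s, hs, hs'⟩ := T_coeff_ne hn
    have h5 : s % 3 ≠ 0 := by
      intro hc
      simp [hc] at hs'
    have h6 : s ^ 2 % 3 = 1 := by
      have : s % 3 = 1 ∨ s % 3 = 2 := by omega
      rcases this with h | h <;> simp [pow_two, Int.mul_emod, h]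
    rw [hs] at h6
    omega
  refine ⟨PowerSeries.mk fun n => coeff (3 * n + 1) g, ?_⟩
  have h9 : g = X * (PowerSeries.mk fun n => coeff (3 * n + 1) g) ^ 3 := by
    ext n
    conv_rhs => rw [← pow_one (X : K), coeff_X_pow_mul', coeff_cube]
    by_cases hn : n % 3 = 1
    · obtain ⟨k, rfl⟩ : ∃ k, n = 3 * k + 1 := ⟨n / 3, by omega⟩
      simp
    · have h0 : coeff n g = 0 := by
        by_contra hc
        exact hn (key n hc)
      rw [h0]
      split_ifs
      · omega
      · rfl
      · rfl
  rw [← h9]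
  exact h1

theorem cube_inj {a b : K} (h : a ^ 3 = b ^ 3) : a = b := by
  have : (a - b) ^ 3 = 0 := by
    linear_combination h - a * b * (a - b) * three_eq
  exact sub_eq_zero.1 (pow_eq_zero_iff (by norm_num) |>.1 this)

theorem alg1 {R : Type*} [CommRing R] (h3 : (3 : R) = 0) (q x p A b : R)
    (hA : p = A ^ 3 + q * p ^ 9) (hx : x = x ^ 9 + q ^ 2 * b ^ 3) :
    p * x ^ 2 = (A * x ^ 6 - q * p ^ 3 * x ^ 3 * b) ^ 3 +
      q ^ 1 * (p ^ 3 * x ^ 6 + q * A * b ^ 2) ^ 3 +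
      q ^ 2 * (q * p ^ 3 * b ^ 2 - A * x ^ 3 * b) ^ 3 := by
  have e1 : ∀ u v : R, (u - v) ^ 3 = u ^ 3 - v ^ 3 := by
    intro u v
    linear_combination (-(u * v * (u - v))) * h3
  have e2 : ∀ u v : R, (u + v) ^ 3 = u ^ 3 + v ^ 3 := by
    intro u v
    linear_combination (u * v * (u + v)) * h3
  rw [e1, e1, e2]
  have hx2 : x ^ 2 = (x ^ 9 + q ^ 2 * b ^ 3) ^ 2 := by rw [← hx]
  have hpx : p * x ^ 2 = (A ^ 3 + q * p ^ 9) * (x ^ 9 + q ^ 2 * b ^ 3) ^ 2 := by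
    rw [← hx2, ← hA]
  rw [hpx]
  linear_combination (q ^ 2 * A ^ 3 * x ^ 9 * b ^ 3 + q ^ 3 * p ^ 9 * x ^ 9 * b ^ 3) * h3

theorem alg2 {R : Type*} [CommRing R] (h3 : (3 : R) = 0) (q x p A b P M w m b0 : R)
    (hA : p = A ^ 3 + q * p ^ 9) (hx : x = x ^ 9 + q ^ 2 * b ^ 3)
    (h1 : b0 * x = A * x ^ 6 - q * p ^ 3 * x ^ 3 * b)
    (r4 : P * M = x ^ 2) (r5 : P * w = p ^ 2) (r5m : M * w = m ^ 2)
    (r3 : M ^ 4 = 1 + q * w ^ 4) (r3p : P ^ 4 = 1 - q * w ^ 4) (r6 : p * x = m * P) :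
    (b0 * x) ^ 3 = (m + q * m ^ 9) * M ^ 3 * x ^ 3 := by
  have h2 : (b0 * x) ^ 3 = p * x ^ 18 - q * p ^ 9 * x ^ 10 := by
    rw [h1]
    linear_combination (- x ^ 18) * hA + q * p ^ 9 * x ^ 9 * hx
      - (A * x ^ 6 * (q * p ^ 3 * x ^ 3 * b) * (A * x ^ 6 - q * p ^ 3 * x ^ 3 * b)) * h3
  have h3' : p * x ^ 18 - q * p ^ 9 * x ^ 10 = p * x ^ 10 * P ^ 4 := by
    have e1 : x ^ 8 = P ^ 4 * M ^ 4 := by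
      rw [← mul_pow, r4]; ring
    have e2 : p ^ 8 = P ^ 4 * w ^ 4 := by
      rw [← mul_pow, r5]; ring
    linear_combination p * x ^ 10 * e1 - q * p * x ^ 10 * e2 + p * x ^ 10 * P ^ 4 * r3
  have h4 : (m + q * m ^ 9) * M ^ 3 * x ^ 3 = p * x ^ 10 * P ^ 4 := by
    have e1 : m ^ 8 = M ^ 4 * w ^ 4 := by
      rw [← mul_pow, r5m]; ring
    have e2 : 1 + q * m ^ 8 = P ^ 8 := by
      have e3 : P ^ 8 = (1 - q * w ^ 4) ^ 2 := by rw [← r3p]; ring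
      rw [e3, e1, r3]
      linear_combination q * w ^ 4 * h3
    have e4 : P ^ 3 * M ^ 3 = x ^ 6 := by
      rw [← mul_pow, r4]; ring
    linear_combination m * M ^ 3 * x ^ 3 * e2 + m * P ^ 5 * x ^ 3 * e4 - x ^ 9 * P ^ 4 * r6
  rw [h2, h3', ← h4]

theorem xx_dissect {c : K} (hc : phm = phm ^ 9 + X * c ^ 3) :
    xx = xx ^ 9 + X ^ 2 * (expand 2 (by norm_num) c) ^ 3 := by
  have h := congrArg (expand 2 (by norm_num)) hc
  rw [map_add, map_mul, map_pow, map_pow, expand_X] at h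
  exact h

theorem mm_dissect {A : K} (hA : psi = A ^ 3 + X * psi ^ 9) :
    (rescale (-1) A) ^ 3 = mm + X * mm ^ 9 := by
  have h : mm = rescale (-1) (A ^ 3 + X * psi ^ 9) := by
    rw [← hA, mm]
  rw [map_add, map_mul, map_pow, map_pow, rescale_X, ← mm] at h
  have e : (C (-1 : ZMod 3) : K) = -1 := by simp
  rw [e] at h
  linear_combination -h

theorem key_identity (B : K) (hB : B * xx = psi) :
    ∃ A : K, (∀ n, coeff n A ≠ 0 → ∃ x : ℕ, 24 * n + 1 = x ^ 2) ∧ U B = A * phm := by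
  obtain ⟨A, hA, hAs⟩ := psi_dissect
  obtain ⟨c, hc⟩ := phm_dissect
  obtain ⟨b1, b2, hb⟩ := exists_dissect B
  have hx := xx_dissect hc
  have hA' := mm_dissect hA
  generalize expand 2 (by norm_num) c = b at hx
  refine ⟨rescale (-1) A, ?_, ?_⟩
  · intro n hn
    apply hAs n
    intro h0
    rw [coeff_rescale, h0, mul_zero] at hn
    exact hn rfl
  have h1 : U B * xx = A * xx ^ 6 - X * psi ^ 3 * xx ^ 3 * b := by
    apply dissect_unique (b := b1 * xx) (c := b2 * xx) (b' := psi ^ 3 * xx ^ 6 + X * A * b ^ 2)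
      (c' := X * psi ^ 3 * b ^ 2 - A * xx ^ 3 * b)
    rw [← alg1 three_eq X xx psi A b hA hx]
    linear_combination (-xx ^ 3) * hb + xx ^ 2 * hB
  have h2 := alg2 three_eq X xx psi A b phi phm ww mm (U B) hA hx h1 r4 r5 r5m r3 r3p r6
  have h5 : U B * xx = (rescale (-1) A * phm) * xx := by
    apply cube_inj
    rw [h2, mul_pow, mul_pow, hA']
  exact mul_right_cancel₀ (ne_of_cc cc_xx) h5

section Shanks

variable {R : Type*} [CommRing R]

/-- even factors with index in `(s, n]` -/
def Wp (q : R) (s n : ℕ) : R := ∏ k ∈ Finset.Ico s n, (1 - q ^ (2 * (k + 1)))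
/-- odd factors -/
def Op (q : R) (s : ℕ) : R := ∏ k ∈ Finset.range s, (1 - q ^ (2 * k + 1))
/-- partial sums of `ψ` -/
def Sp (q : R) (n : ℕ) : R := ∑ s ∈ Finset.range n, q ^ (s * (s + 1) / 2)
/-- the sum of Shanks -/
def Vp (q : R) (n : ℕ) : R := ∑ s ∈ Finset.range n, Wp q s n * Op q s * q ^ (s * (2 * n + 1))

theorem Wp_succ_right (q : R) {s n : ℕ} (h : s ≤ n) :
    Wp q s (n + 1) = Wp q s n * (1 - q ^ (2 * (n + 1))) := by
  unfold Wp
  rw [Finset.prod_Ico_succ_top h]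

theorem Wp_left (q : R) {s n : ℕ} (h : s < n) :
    Wp q s n = (1 - q ^ (2 * (s + 1))) * Wp q (s + 1) n := by
  unfold Wp
  rw [Finset.prod_eq_prod_Ico_succ_bot h]

theorem Wp_self (q : R) (n : ℕ) : Wp q n n = 1 := by simp [Wp]

theorem Op_succ (q : R) (n : ℕ) : Op q (n + 1) = Op q n * (1 - q ^ (2 * n + 1)) := by
  unfold Op
  rw [Finset.prod_range_succ]

theorem telescope (q : R) (n j : ℕ) (hj : j ≤ n) :
    ∑ s ∈ Finset.range j, Wp q s (n + 1) * Op q s * q ^ (s * (2 * (n + 1) + 1)) =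
    (1 - q ^ (2 * n + 1)) * (∑ s ∈ Finset.range j, Wp q s n * Op q s * q ^ (s * (2 * n + 1))) +
      Wp q j n * Op q j * (1 - q ^ (2 * j)) * q ^ (j * (2 * n + 1)) := by
  induction j with
  | zero => simp
  | succ j ih =>
    rw [Finset.sum_range_succ, Finset.sum_range_succ, ih (by omega), Wp_succ_right q (by omega),
      Wp_left q (show j < n by omega), Op_succ]
    ring

theorem shanks (q : R) (n : ℕ) : Vp q n = Op q n * Sp q (2 * n) := by
  induction n with
  | zero => simp [Vp, Sp]
  | succ n ih =>
    have h1 : Vp q (n + 1) = (1 - q ^ (2 * n + 1)) * Vp q n +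
        Op q n * (1 - q ^ (2 * n)) * q ^ (n * (2 * n + 1)) +
        (1 - q ^ (2 * (n + 1))) * Op q n * q ^ (n * (2 * (n + 1) + 1)) := by
      unfold Vp
      rw [Finset.sum_range_succ, telescope q n n le_rfl, Wp_succ_right q le_rfl, Wp_self]
      ring
    have h2 : Sp q (2 * (n + 1)) = Sp q (2 * n) + q ^ (n * (2 * n + 1)) +
        q ^ (n * (2 * n + 1) + (2 * n + 1)) := by
      unfold Sp
      rw [show 2 * (n + 1) = 2 * n + 1 + 1 by ring, Finset.sum_range_succ, Finset.sum_range_succ]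
      have e1 : 2 * n * (2 * n + 1) / 2 = n * (2 * n + 1) := by
        rw [mul_assoc, Nat.mul_div_cancel_left _ (by norm_num)]
      have e2 : (2 * n + 1) * (2 * n + 1 + 1) / 2 = n * (2 * n + 1) + (2 * n + 1) := by
        rw [show (2 * n + 1) * (2 * n + 1 + 1) = 2 * (n * (2 * n + 1) + (2 * n + 1)) by ring,
          Nat.mul_div_cancel_left _ (by norm_num)]
      rw [e1, e2]
    rw [h1, h2, ih, Op_succ]
    ring

theorem shanks_dvd (q : R) (n : ℕ) (hn : 1 ≤ n) :
    q ^ (2 * n + 1) ∣ Op q n * Sp q (2 * n) - Wp q 0 n := by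
  rw [← shanks]
  obtain ⟨k, rfl⟩ : ∃ k, n = k + 1 := ⟨n - 1, by omega⟩
  unfold Vp
  rw [Finset.sum_range_succ']
  have : Wp q 0 (k + 1) * Op q 0 * q ^ (0 * (2 * (k + 1) + 1)) = Wp q 0 (k + 1) := by
    simp [Op]
  rw [this, add_sub_cancel_right]
  apply Finset.dvd_sum
  intro i _
  apply Dvd.dvd.mul_left
  exact pow_dvd_pow _ (by nlinarith)

theorem Op_mul_neg (q : R) (n : ℕ) : Op q n * Op (-q) n = Op (q ^ 2) n := by
  induction n with
  | zero => simp [Op]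
  | succ n ih =>
    rw [Op_succ, Op_succ, Op_succ, ← ih, Odd.neg_pow ⟨n, rfl⟩]
    ring

theorem Wp_neg (q : R) (m : ℕ) : Wp (-q) 0 (2 * m) = Op (q ^ 2) m * Wp (q ^ 2) 0 m := by
  induction m with
  | zero => simp [Op, Wp]
  | succ m ih =>
    rw [show 2 * (m + 1) = 2 * m + 1 + 1 by ring, Wp_succ_right _ (by omega),
      Wp_succ_right _ (by omega), ih, Op_succ, Wp_succ_right _ (by omega),
      Even.neg_pow ⟨2 * m + 1, by ring⟩, Even.neg_pow ⟨2 * m + 1 + 1, by ring⟩]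
    ring

theorem Op_trunc (q : R) (m j : ℕ) : q ^ (2 * m + 1) ∣ Op q (m + j) - Op q m := by
  induction j with
  | zero => simp
  | succ j ih =>
    rw [← add_assoc, Op_succ]
    have : Op q (m + j) * (1 - q ^ (2 * (m + j) + 1)) - Op q m =
      (Op q (m + j) - Op q m) - Op q (m + j) * q ^ (2 * (m + j) + 1) := by ring
    rw [this]
    exact dvd_sub ih (Dvd.dvd.mul_left (pow_dvd_pow _ (by omega)) _)

/-- the truncated denominator of the generating function -/
def Dp (q : R) (n : ℕ) : R := ∏ i ∈ Finset.range n, if ¬ 4 ∣ i + 1 then 1 - q ^ (i + 1) else 1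

theorem Dp_eq (q : R) (m : ℕ) : Dp q (4 * m) = Op q (2 * m) * Op (q ^ 2) m := by
  induction m with
  | zero => simp [Dp, Op]
  | succ m ih =>
    unfold Dp at ih ⊢
    rw [show 4 * (m + 1) = 4 * m + 1 + 1 + 1 + 1 by ring, Finset.prod_range_succ,
      Finset.prod_range_succ, Finset.prod_range_succ, Finset.prod_range_succ, ih,
      show 2 * (m + 1) = 2 * m + 1 + 1 by ring, Op_succ, Op_succ, Op_succ,
      if_pos (by omega), if_pos (by omega), if_pos (by omega), if_neg (by omega)]
    ring

end Shanks

theorem psi_trunc (n : ℕ) (hn : 1 ≤ n) : (X : K) ^ (2 * n + 1) ∣ psi - Sp X (2 * n) := by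
  rw [X_pow_dvd_iff]
  intro d hd
  rw [map_sub, sub_eq_zero]
  unfold psi Sp
  rw [coeff_T_sum _ _ d (Finset.range (2 * n)), map_sum]
  · apply Finset.sum_congr rfl
    intro s _
    rw [coeff_X_pow]
    have : (tri s = (d : ℤ)) ↔ d = s * (s + 1) / 2 := by
      unfold tri
      constructor
      · intro h
        have : ((s * (s + 1) / 2 : ℕ) : ℤ) = d := by
          rw [← h]; push_cast; rfl
        exact_mod_cast this.symm
      · rintro rfl
        push_cast
        rfl
    simp only [this]
  · intro s hs
    rw [Finset.mem_range]
    by_contra! hc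
    have h := two_tri s
    rw [hs] at h
    have h4 : 2 * d = s * (s + 1) := by exact_mod_cast h
    nlinarith

theorem mm_trunc (n : ℕ) (hn : 1 ≤ n) : (X : K) ^ (2 * n + 1) ∣ mm - Sp (-X) (2 * n) := by
  have h := map_dvd (rescale (-1 : ZMod 3)) (psi_trunc n hn)
  have e : rescale (-1 : ZMod 3) (X : K) = -X := by
    rw [rescale_X]; simp
  rw [map_pow, map_sub, e, ← mm, Sp, map_sum] at h
  simp only [map_pow, e] at h
  rw [Odd.neg_pow ⟨n, rfl⟩, neg_dvd] at h
  exact h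

theorem ww_trunc (n : ℕ) (hn : 1 ≤ n) :
    ((X : K) ^ 2) ^ (2 * n + 1) ∣ ww - Sp (X ^ 2) (2 * n) := by
  have h := map_dvd (expand 2 (by norm_num)) (psi_trunc n hn)
  rw [map_pow, map_sub, expand_X, ← ww, Sp, map_sum] at h
  simp only [map_pow, expand_X] at h
  exact h

/-- generating function of `b_4` modulo three -/
noncomputable def BB : K := PowerSeries.mk fun n => (bReg 4 n : ZMod 3)

open PowerSeries.WithPiTopology Filter Topology in
theorem BB_trunc (n : ℕ) : (X : K) ^ (n + 1) ∣ BB * Dp X n - 1 := by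
  let _ : TopologicalSpace (ZMod 3) := ⊥
  have : DiscreteTopology (ZMod 3) := ⟨rfl⟩
  have h := Nat.Partition.hasProd_powerSeriesMk_card_restricted (ZMod 3) (fun i => ¬ 4 ∣ i)
  have hB : (PowerSeries.mk fun n ↦ ((Nat.Partition.restricted n (fun i => ¬ 4 ∣ i)).card : ZMod 3))
      = BB := by
    ext k
    simp only [BB, coeff_mk, bReg, Nat.Partition.restricted]
  rw [hB] at h
  set g : ℕ → K := fun i ↦ if ¬ 4 ∣ (i + 1) then ∑' j, X ^ ((i + 1) * j) else 1 with hg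
  have hg1 : ∀ i, g i * (if ¬ 4 ∣ i + 1 then 1 - X ^ (i + 1) else 1) = 1 := by
    intro i
    simp only [hg]
    by_cases hi : 4 ∣ i + 1
    · simp [hi]
    · rw [if_pos hi, if_pos hi]
      have := tsum_pow_mul_one_sub_of_constantCoeff_eq_zero (f := (X : K) ^ (i + 1)) (by simp)
      simp only [← pow_mul] at this
      exact this
  have hg2 : ∀ i, (X : K) ^ (i + 1) ∣ g i - 1 := by
    intro i
    have h1 := hg1 i
    by_cases hi : 4 ∣ i + 1
    · rw [if_neg (not_not.2 hi), mul_one] at h1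
      simp [h1]
    · rw [if_pos hi] at h1
      exact ⟨g i, by linear_combination h1⟩
  have hprod : ∀ s : Finset ℕ, Finset.range n ⊆ s →
      (X : K) ^ (n + 1) ∣ (∏ i ∈ s, g i) * Dp X n - 1 := by
    intro s hs
    have e1 : (∏ i ∈ s, g i) * Dp X n = ∏ i ∈ s \ Finset.range n, g i := by
      rw [← Finset.prod_sdiff hs, mul_assoc, Dp, ← Finset.prod_mul_distrib,
        Finset.prod_congr rfl (fun i _ => hg1 i)]
      simp
    rw [e1]
    have : ∀ t : Finset ℕ, (∀ i ∈ t, n ≤ i) → (X : K) ^ (n + 1) ∣ (∏ i ∈ t, g i) - 1 := by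
      intro t
      induction t using Finset.induction_on with
      | empty => simp
      | insert a t ha ih =>
        intro ht
        rw [Finset.prod_insert ha]
        have h1 := ih fun i hi => ht i (Finset.mem_insert_of_mem hi)
        have h2 : (X : K) ^ (n + 1) ∣ g a - 1 :=
          (pow_dvd_pow _ (by have := ht a (Finset.mem_insert_self _ _); omega)).trans (hg2 a)
        have : g a * ∏ i ∈ t, g i - 1 = g a * (∏ i ∈ t, g i - 1) + (g a - 1) := by ring
        rw [this]
        exact dvd_add (Dvd.dvd.mul_left h1 _) h2
    apply this
    intro i hi
    simpa using (Finset.mem_sdiff.1 hi).2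
  rw [X_pow_dvd_iff]
  intro d hd
  rw [map_sub, sub_eq_zero]
  have ht : Tendsto (fun s : Finset ℕ => coeff d ((∏ i ∈ s, g i) * Dp X n)) atTop
      (𝓝 (coeff d (BB * Dp X n))) := by
    have h0 : Tendsto (fun s : Finset ℕ => (∏ i ∈ s, g i)) atTop (𝓝 BB) := h
    exact ((continuous_coeff (ZMod 3) d).tendsto _).comp (h0.mul_const _)
  refine tendsto_nhds_unique_of_eventuallyEq ht (tendsto_const_nhds (x := coeff d (1 : K))) ?_
  filter_upwards [eventually_ge_atTop (Finset.range n)] with s hs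
  have := X_pow_dvd_iff.1 (hprod s hs) d hd
  rwa [map_sub, sub_eq_zero] at this

theorem cc_Op (m : ℕ) : constantCoeff (Op ((X : K) ^ 2) m) = 1 := by
  unfold Op
  rw [map_prod]
  apply Finset.prod_eq_one
  intro i _
  simp

theorem BB_mm_trunc (m : ℕ) (hm : 1 ≤ m) : (X : K) ^ (4 * m + 1) ∣ BB * mm - ww := by
  have h1 := BB_trunc (4 * m)
  rw [Dp_eq] at h1
  have h2 : (X : K) ^ (4 * m + 1) ∣ Op (-X) (2 * m) * Sp (-X) (2 * (2 * m)) - Wp (-X) 0 (2 * m) := by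
    have := shanks_dvd (-X : K) (2 * m) (by omega)
    rw [Odd.neg_pow ⟨2 * m, rfl⟩, neg_dvd] at this
    exact (pow_dvd_pow _ (by omega)).trans this
  rw [Wp_neg] at h2
  have h3 : (X : K) ^ (4 * m + 1) ∣ mm - Sp (-X) (2 * (2 * m)) :=
    (pow_dvd_pow _ (by omega)).trans (mm_trunc (2 * m) (by omega))
  have h4 : (X : K) ^ (4 * m + 1) ∣ Op (X ^ 2) m * Sp (X ^ 2) (2 * m) - Wp (X ^ 2) 0 m := by
    have := shanks_dvd (X ^ 2 : K) m hm
    rw [← pow_mul] at this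
    exact (pow_dvd_pow _ (by omega)).trans this
  have h5 : (X : K) ^ (4 * m + 1) ∣ ww - Sp (X ^ 2) (2 * m) := by
    have := ww_trunc m hm
    rw [← pow_mul] at this
    exact (pow_dvd_pow _ (by omega)).trans this
  have h6 : (X : K) ^ (4 * m + 1) ∣ Op X (2 * m) * Op (-X) (2 * m) - Op (X ^ 2) m := by
    have := Op_trunc (X ^ 2 : K) m m
    rw [← pow_mul, ← two_mul] at this
    rw [Op_mul_neg]
    exact (pow_dvd_pow _ (by omega)).trans this
  have hQ := cc_Op m
  generalize Op ((X : K) ^ 2) m = Q at *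
  generalize Op (X : K) (2 * m) = O at *
  generalize Op (-X : K) (2 * m) = O' at *
  generalize Wp ((X : K) ^ 2) 0 m = F at *
  generalize Sp (-X : K) (2 * (2 * m)) = S' at *
  generalize Sp (X ^ 2 : K) (2 * m) = S at *
  have hfin : (X : K) ^ (4 * m + 1) ∣ Q * (BB * mm - ww) := by
    obtain ⟨c1, h1⟩ := h1
    obtain ⟨c2, h2⟩ := h2
    obtain ⟨c3, h3⟩ := h3
    obtain ⟨c4, h4⟩ := h4
    obtain ⟨c5, h5⟩ := h5
    obtain ⟨c6, h6⟩ := h6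
    refine ⟨F * c1 + BB * O * c2 + BB * O * O' * c3 - c4 - Q * c5 - BB * mm * c6, ?_⟩
    linear_combination F * h1 + BB * O * h2 + BB * O * O' * h3 - h4 - Q * h5 - BB * mm * h6
  have hu : IsUnit Q := by
    rw [isUnit_iff_constantCoeff, hQ]
    exact isUnit_one
  exact (hu.dvd_mul_left).1 hfin

theorem BB_mm : BB * mm = ww := by
  ext d
  have := X_pow_dvd_iff.1 (BB_mm_trunc (d + 1) (by omega)) d (by omega)
  rwa [map_sub, sub_eq_zero] at this

theorem BB_xx : BB * xx = psi := by
  apply mul_right_cancel₀ (ne_of_cc cc_mm)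
  linear_combination xx * BB_mm - r2

theorem not_square_six (l : ℕ) [Fact l.Prime]
    (hmod : l % 24 = 13 ∨ l % 24 = 17 ∨ l % 24 = 19 ∨ l % 24 = 23) :
    legendreSym l (-6) = -1 := by
  rw [jacobiSym.legendreSym.to_jacobiSym, jacobiSym.mod_right (-6) (by rw [Nat.odd_iff]; omega)]
  have : 4 * (-6 : ℤ).natAbs = 24 := by decide
  rw [this]
  rcases hmod with h | h | h | h <;> rw [h] <;> norm_num

theorem dvd_of_form (l : ℕ) (hl : l.Prime)
    (hmod : l % 24 = 13 ∨ l % 24 = 17 ∨ l % 24 = 19 ∨ l % 24 = 23) (x y : ℤ)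
    (h : (l : ℤ) ∣ x ^ 2 + 24 * y ^ 2) : (l : ℤ) ∣ x ∧ (l : ℤ) ∣ y := by
  have : Fact l.Prime := ⟨hl⟩
  have hs := not_square_six l hmod
  have h' : (x : ZMod l) ^ 2 - ((-6 : ℤ) : ZMod l) * ((2 * y : ℤ) : ZMod l) ^ 2 = 0 := by
    have := (ZMod.intCast_zmod_eq_zero_iff_dvd _ l).2 h
    push_cast at this ⊢
    linear_combination this
  obtain ⟨h1, h2⟩ := legendreSym.eq_zero_mod_of_eq_neg_one hs h'
  have h1' := (ZMod.intCast_zmod_eq_zero_iff_dvd _ l).1 h1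
  have h2' := (ZMod.intCast_zmod_eq_zero_iff_dvd _ l).1 h2
  refine ⟨h1', ?_⟩
  have hp : Prime (l : ℤ) := Nat.prime_iff_prime_int.1 hl
  rcases hp.dvd_or_dvd h2' with h3 | h3
  · exfalso
    have := Int.le_of_dvd (by norm_num) h3
    omega
  · exact h3

theorem coeff_zero_of (l : ℕ) (hl : l.Prime)
    (hmod : l % 24 = 13 ∨ l % 24 = 17 ∨ l % 24 = 19 ∨ l % 24 = 23)
    (n j k : ℕ) (hj1 : 1 ≤ j) (hj2 : j ≤ l - 1)
    (hk : 24 * k + 1 = l * (24 * (l * n + j) + l)) : coeff (3 * k) BB = 0 := by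
  obtain ⟨A, hA, hU⟩ := key_identity BB BB_xx
  have e : coeff (3 * k) BB = coeff k (U BB) := by simp [U]
  rw [e, hU, coeff_mul]
  apply Finset.sum_eq_zero
  rintro ⟨a, b⟩ hab
  rw [Finset.HasAntidiagonal.mem_antidiagonal] at hab
  by_contra hne
  obtain ⟨x, hx⟩ := hA a (left_ne_zero_of_mul hne)
  obtain ⟨y, hy, _⟩ := T_coeff_ne (right_ne_zero_of_mul hne)
  have hab' : (a : ℤ) + b = k := by exact_mod_cast hab
  have hx' : 24 * (a : ℤ) + 1 = x ^ 2 := by exact_mod_cast hx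
  have hk' : 24 * (k : ℤ) + 1 = l * (24 * (l * n + j) + l) := by exact_mod_cast hk
  have hsum : (x : ℤ) ^ 2 + 24 * y ^ 2 = l * (24 * (l * n + j) + l) := by
    rw [← hk', ← hab', ← hx']
    simp only at hy
    rw [hy]
    ring
  obtain ⟨⟨u, hu⟩, ⟨v, hv⟩⟩ := dvd_of_form l hl hmod x y ⟨_, hsum⟩
  have hl0 : (l : ℤ) ≠ 0 := by exact_mod_cast hl.ne_zero
  have h24 : (l : ℤ) * (u ^ 2 + 24 * v ^ 2) = 24 * (l * n + j) + l := by
    apply mul_left_cancel₀ hl0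
    rw [← hsum, hu, hv]
    ring
  have hd : (l : ℤ) ∣ 24 * j := ⟨u ^ 2 + 24 * v ^ 2 - 24 * n - 1, by linear_combination -h24⟩
  have hd' : l ∣ 24 * j := by exact_mod_cast hd
  rcases (Nat.Prime.dvd_mul hl).1 hd' with h | h
  · have h24' := Nat.le_of_dvd (by norm_num) h
    have : l = 13 ∨ l = 17 ∨ l = 19 ∨ l = 23 := by omega
    rcases this with rfl | rfl | rfl | rfl <;> omega
  · have := Nat.le_of_dvd (by omega) h
    omega

end B4

/-- If `l ≡ 13,17,19,23 (mod 24)` is prime, then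
`b_4(3l(ln+j) + (l²-1)/8) ≡ 0 (mod 3)` for all `n` and `1 ≤ j ≤ l-1`. -/
theorem b4_mod_three_family_one (l : ℕ) (hl : l.Prime)
    (hmod : l % 24 = 13 ∨ l % 24 = 17 ∨ l % 24 = 19 ∨ l % 24 = 23)
    (n j : ℕ) (hj1 : 1 ≤ j) (hj2 : j ≤ l - 1) :
    bReg 4 (3 * l * (l * n + j) + (l ^ 2 - 1) / 8) % 3 = 0 := by
  have hsq : l ^ 2 % 24 = 1 := by
    rcases hmod with h | h | h | h <;> simp [Nat.pow_mod, h]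
  obtain ⟨t, ht⟩ : ∃ t, l ^ 2 = 24 * t + 1 := ⟨l ^ 2 / 24, by omega⟩
  have e1 : (l ^ 2 - 1) / 8 = 3 * t := by omega
  have e2 : 3 * l * (l * n + j) + (l ^ 2 - 1) / 8 = 3 * (l * (l * n + j) + t) := by
    rw [e1]; ring
  rw [e2]
  have h := B4.coeff_zero_of l hl hmod n j (l * (l * n + j) + t) hj1 hj2 (by
    have : l * (24 * (l * n + j) + l) = 24 * (l * (l * n + j)) + l ^ 2 := by ring
    rw [this, ht]
    ring)
  rw [B4.BB, PowerSeries.coeff_mk, ZMod.natCast_eq_zero_iff] at h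
  exact Nat.mod_eq_zero_of_dvd h
end
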